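/- In every MILL model, for all X and Y, entails (par X Y) (dual (tensor (dual X) (dual Y))); that is, X ⅋ Y ⊢ (X* ⊗ Y*)* is derivable in MILL, where X* denotes dual X = X ⊸ I and A ⅋ B denotes par A B = A* ⊸ B. -/

import Mathlib

/-!
Read `X ⊢ Y` as `X ≤ Y`, so that `X ⊗ -` is left adjoint to `X ⊸ -`. Then `X ⅋ Y = X* ⊸ Y` lies
below `X* ⊸ Y**` by the unit of double dualization `Y ≤ Y**`, and `X* ⊸ (Y* ⊸ I)` lies below
`(X* ⊗ Y*) ⊸ I` by uncurrying.
-/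

section Residuation

variable {F : Type*} [Preorder F] {tensor lollipop : F → F → F}

theorem le_lollipop_lollipop (tensor_comm : ∀ X Y, tensor X Y ≤ tensor Y X)
    (gc : ∀ X, GaloisConnection (tensor X) (lollipop X)) (X Z : F) :
    X ≤ lollipop (lollipop X Z) Z :=
  (gc _).le_u ((tensor_comm _ _).trans ((gc X).l_u_le Z))

theorem lollipop_antitone_left (tensor_comm : ∀ X Y, tensor X Y ≤ tensor Y X)
    (gc : ∀ X, GaloisConnection (tensor X) (lollipop X)) (Z : F) :
    Antitone fun X ↦ lollipop X Z := by
  intro X Y hXY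
  have hX : X ≤ lollipop (lollipop Y Z) Z :=
    hXY.trans (le_lollipop_lollipop tensor_comm gc Y Z)
  exact (gc X).le_u ((tensor_comm _ _).trans ((gc _).l_le hX))

theorem lollipop_lollipop_le_lollipop_tensor
    (tensor_assoc : ∀ X Y Z, tensor (tensor X Y) Z ≤ tensor X (tensor Y Z))
    (gc : ∀ X, GaloisConnection (tensor X) (lollipop X)) (X Y Z : F) :
    lollipop X (lollipop Y Z) ≤ lollipop (tensor Y X) Z := by
  apply (gc _).le_u
  calc tensor (tensor Y X) (lollipop X (lollipop Y Z))
      ≤ tensor Y (tensor X (lollipop X (lollipop Y Z))) := tensor_assoc _ _ _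
    _ ≤ tensor Y (lollipop Y Z) := (gc Y).monotone_l ((gc X).l_u_le _)
    _ ≤ Z := (gc Y).l_u_le Z

/-- For `X = A*` and `Z = I` this is `A ⅋ Y ⊢ (A* ⊗ Y*)*`. -/
theorem mill_par_tensor_dual_general (tensor_comm : ∀ X Y, tensor X Y ≤ tensor Y X)
    (tensor_assoc : ∀ X Y Z, tensor (tensor X Y) Z ≤ tensor X (tensor Y Z))
    (gc : ∀ X, GaloisConnection (tensor X) (lollipop X)) (X Y Z : F) :
    lollipop X Y ≤ lollipop (tensor X (lollipop Y Z)) Z :=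
  calc lollipop X Y
      ≤ lollipop X (lollipop (lollipop Y Z) Z) :=
        (gc X).monotone_u (le_lollipop_lollipop tensor_comm gc Y Z)
    _ ≤ lollipop (tensor (lollipop Y Z) X) Z :=
        lollipop_lollipop_le_lollipop_tensor tensor_assoc gc X (lollipop Y Z) Z
    _ ≤ lollipop (tensor X (lollipop Y Z)) Z :=
        lollipop_antitone_left tensor_comm gc Z (tensor_comm _ _)

end Residuation

/-- In every MILL model, X ⅋ Y ⊢ (X* ⊗ Y*)*. -/
theorem mill_par_tensor_dual
    {F : Type*} (entails : F → F → Prop) (tensor lollipop : F → F → F)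
    (I : F) (dual : F → F) (par : F → F → F)
    (rule_i : ∀ X : F, entails X X)
    (rule_o : ∀ X Y Z : F, entails X Y → entails Y Z → entails X Z)
    (rule_tensor : ∀ W X Y Z : F,
      entails W X → entails Y Z → entails (tensor W Y) (tensor X Z))
    (rule_a : ∀ W X Y Z : F,
      entails W (tensor (tensor X Y) Z) ↔ entails W (tensor X (tensor Y Z)))
    (rule_l : ∀ X Y : F, entails X (tensor I Y) ↔ entails X Y)
    (rule_r : ∀ X Y : F, entails X (tensor Y I) ↔ entails X Y)
    (rule_b : ∀ W X Y : F, entails W (tensor X Y) ↔ entails W (tensor Y X))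
    (rule_c : ∀ X Y Z : F,
      entails (tensor X Y) Z ↔ entails Y (lollipop X Z))
    (hdual : ∀ X : F, dual X = lollipop X I)
    (hpar : ∀ X Y : F, par X Y = lollipop (dual X) Y) :
    ∀ X Y : F, entails (par X Y) (dual (tensor (dual X) (dual Y))) := by
  intro X Y
  let _ : Preorder F := { le := entails, le_refl := rule_i, le_trans := rule_o }
  rw [hpar, hdual (tensor _ _), hdual Y]
  exact mill_par_tensor_dual_general (fun _ _ ↦ (rule_b _ _ _).1 (rule_i _))
    (fun _ _ _ ↦ (rule_a _ _ _ _).1 (rule_i _)) rule_c (dual X) Y I
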